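/- For all nonnegative reals a ≤ a' and b, and all natural numbers j₁, j₂, the generalized binomial coefficient satisfies binom(a + b + j₁ + j₂, a + j₁) ≤ binom(a' + b + j₁ + j₂, a' + j₁). (Equivalently, the coefficient α_{j₁,j₂} = binom(ρ₁q₁ + ρ₂q₂ + j₁ + j₂, ρ₁q₁ + j₁)⁻¹ is monotone nonincreasing in ρ₁ and ρ₂.) -/

import Mathlib

noncomputable def genBinom (x y : ℝ) : ℝ :=
  Real.Gamma (x + 1) / (Real.Gamma (y + 1) * Real.Gamma (x - y + 1))

/-! Along a diagonal `x - y = d` the factor `Γ (d + 1)` is constant, so the claim is that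
`Γ (y + d + 1) / Γ (y + 1)` increases with `y`. This is the log-convexity of `Γ`: among pairs of
points with a given sum, a convex function has the larger sum of values at the outer pair. -/

theorem combo_add_combo_swap {R M : Type*} [Semiring R] [AddCommMonoid M] [Module R M] {a b : R}
    (hab : a + b = 1) (x y : M) : (a • x + b • y) + (b • x + a • y) = x + y := by
  rw [add_add_add_comm, ← add_smul, ← add_smul, add_comm b a, hab, one_smul, one_smul]

theorem convexOn_add_le_add_of_mem_segment {𝕜 E β : Type*} [Semiring 𝕜] [PartialOrder 𝕜]
    [AddCancelCommMonoid E] [Module 𝕜 E] [AddCommMonoid β] [PartialOrder β]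
    [IsOrderedAddMonoid β] [Module 𝕜 β] {s : Set E} {f : E → β} (hf : ConvexOn 𝕜 s f)
    {x y z w : E} (hx : x ∈ s) (hz : z ∈ s) (hy : y ∈ segment 𝕜 x z) (h : y + w = x + z) :
    f y + f w ≤ f x + f z := by
  obtain ⟨a, b, ha, hb, hab, rfl⟩ := hy
  have hw : w = b • x + a • z := add_left_cancel (h.trans (combo_add_combo_swap hab x z).symm)
  calc
    f (a • x + b • z) + f w ≤ (a • f x + b • f z) + (b • f x + a • f z) :=
      hw ▸ add_le_add (hf.2 hx hz ha hb hab) (hf.2 hx hz hb ha ((add_comm b a).trans hab))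
    _ = f x + f z := combo_add_combo_swap hab (f x) (f z)

theorem Gamma_add_mul_Gamma_add_le {x c d : ℝ} (hx : 0 < x) (hc : 0 ≤ c) (hd : 0 ≤ d) :
    Real.Gamma (x + c) * Real.Gamma (x + d) ≤ Real.Gamma x * Real.Gamma (x + c + d) := by
  have hΓ {t : ℝ} (ht : 0 ≤ t) : 0 < Real.Gamma (x + t) := Real.Gamma_pos_of_pos (by positivity)
  have hΓx : 0 < Real.Gamma x := Real.Gamma_pos_of_pos hx
  have hΓcd : 0 < Real.Gamma (x + c + d) := Real.Gamma_pos_of_pos (by positivity)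
  have hseg : x + c ∈ segment ℝ x (x + c + d) := by
    rw [segment_eq_Icc (by linarith)]
    constructor <;> linarith
  have hlog : Real.log (Real.Gamma (x + c)) + Real.log (Real.Gamma (x + d)) ≤
      Real.log (Real.Gamma x) + Real.log (Real.Gamma (x + c + d)) :=
    convexOn_add_le_add_of_mem_segment Real.convexOn_log_Gamma (Set.mem_Ioi.2 hx)
      (Set.mem_Ioi.2 (by positivity)) hseg (by ring)
  rwa [← Real.log_mul (hΓ hc).ne' (hΓ hd).ne', ← Real.log_mul hΓx.ne' hΓcd.ne',
    Real.log_le_log_iff (mul_pos (hΓ hc) (hΓ hd)) (mul_pos hΓx hΓcd)] at hlog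

theorem Gamma_add_div_Gamma_le {x x' d : ℝ} (hx : 0 < x) (hxx' : x ≤ x') (hd : 0 ≤ d) :
    Real.Gamma (x + d) / Real.Gamma x ≤ Real.Gamma (x' + d) / Real.Gamma x' := by
  rw [div_le_div_iff₀ (Real.Gamma_pos_of_pos hx) (Real.Gamma_pos_of_pos (hx.trans_le hxx'))]
  have h := Gamma_add_mul_Gamma_add_le hx (sub_nonneg.2 hxx') hd
  rw [add_sub_cancel] at h
  linarith

theorem genBinom_add_left (y d : ℝ) :
    genBinom (y + d) y = Real.Gamma (y + 1 + d) / Real.Gamma (y + 1) / Real.Gamma (d + 1) := by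
  rw [genBinom, add_sub_cancel_left, add_right_comm, div_div]

theorem genBinom_mono_general {y y' d : ℝ} (hy : -1 < y) (hyy' : y ≤ y') (hd : 0 ≤ d) :
    genBinom (y + d) y ≤ genBinom (y' + d) y' := by
  rw [genBinom_add_left, genBinom_add_left]
  have hΓd : 0 ≤ Real.Gamma (d + 1) := Real.Gamma_nonneg_of_nonneg (by positivity)
  exact div_le_div_of_nonneg_right (Gamma_add_div_Gamma_le (by linarith) (by linarith) hd) hΓd

theorem genBinom_mono (a a' b : ℝ) (ha : 0 ≤ a) (haa' : a ≤ a') (hb : 0 ≤ b)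
    (j₁ j₂ : ℕ) :
    genBinom (a + b + j₁ + j₂) (a + j₁) ≤ genBinom (a' + b + j₁ + j₂) (a' + j₁) := by
  have hy : -1 < a + j₁ := neg_one_lt_zero.trans_le (by positivity)
  simpa only [← add_assoc, add_right_comm _ (j₁ : ℝ) b] using
    genBinom_mono_general hy (add_le_add_left haa' (j₁ : ℝ)) (by positivity : 0 ≤ b + j₂)
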